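/- Let λ0 ∈ ℝ, let g be an exchangeable prior, and let d be a pseudo symmetric design with c_{d22} > 0 and q_d(x_d) > 0. Then d is E_{g,λ0}-optimal if and only if max_{s∈S} q_s(x_d)/q_d(x_d) = 1. Moreover, in that case every sequence s with p_s > 0 attains this maximum. -/

import Mathlib

open Matrix MeasureTheory
open scoped Classical

noncomputable section

/-- A treatment sequence: assigns a treatment in `Fin t` to each period in `Fin p`. -/
abbrev TrtSeq (p t : ℕ) := Fin p → Fin t

/-- Treatment/period incidence matrix `T_s`. -/
def Tmat {p t : ℕ} (s : TrtSeq p t) : Matrix (Fin p) (Fin t) ℝ :=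
  Matrix.of fun k i => if s k = i then 1 else 0

/-- Carryover incidence matrix `F_s`: first row zero, row `k` records the treatment
in period `k-1`. -/
def Fmat {p t : ℕ} (s : TrtSeq p t) : Matrix (Fin p) (Fin t) ℝ :=
  Matrix.of fun k i =>
    if (k : ℕ) = 0 then 0
    else if s ⟨(k : ℕ) - 1, Nat.lt_of_le_of_lt (Nat.sub_le _ _) k.isLt⟩ = i then 1 else 0

/-- The all-ones `m × m` matrix `J_m`. -/
def Jmat (m : ℕ) : Matrix (Fin m) (Fin m) ℝ := Matrix.of fun _ _ => 1

/-- `B_t = I_t - J_t / t`. -/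
def Bmat (t : ℕ) : Matrix (Fin t) (Fin t) ℝ := 1 - ((t : ℝ))⁻¹ • Jmat t

/-- `B̃ = Σ⁻¹ - Σ⁻¹ J_p Σ⁻¹ / (1_p' Σ⁻¹ 1_p)`. -/
def Btil {p : ℕ} (S : Matrix (Fin p) (Fin p) ℝ) : Matrix (Fin p) (Fin p) ℝ :=
  S⁻¹ - (((fun _ => (1 : ℝ)) : Fin p → ℝ) ⬝ᵥ (S⁻¹ *ᵥ fun _ => (1 : ℝ)))⁻¹ •
    (S⁻¹ * Jmat p * S⁻¹)

/-- `G_1(s) = T_s`, `G_2(s) = F_s`. -/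
def Gmat {p t : ℕ} (i : Fin 2) (s : TrtSeq p t) : Matrix (Fin p) (Fin t) ℝ :=
  if i = 0 then Tmat s else Fmat s

/-- An approximate design: nonnegative weights summing to one. -/
def IsDesign {p t : ℕ} (w : TrtSeq p t → ℝ) : Prop :=
  (∀ s, 0 ≤ w s) ∧ ∑ s : TrtSeq p t, w s = 1

/-- `Ĉ_{sij} = B_t G_i(s)' B̃ G_j(s) B_t`. -/
def Chat {p t : ℕ} (S : Matrix (Fin p) (Fin p) ℝ) (s : TrtSeq p t) (i j : Fin 2) :
    Matrix (Fin t) (Fin t) ℝ :=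
  Bmat t * (Gmat i s)ᵀ * Btil S * Gmat j s * Bmat t

/-- `c_{sij} = tr Ĉ_{sij}`. -/
def cseq {p t : ℕ} (S : Matrix (Fin p) (Fin p) ℝ) (s : TrtSeq p t) (i j : Fin 2) : ℝ :=
  (Chat S s i j).trace

/-- `Ĉ_{dij} = n ∑_s p_s Ĉ_{sij}`. -/
def ChatD {p t : ℕ} (n : ℕ) (S : Matrix (Fin p) (Fin p) ℝ) (w : TrtSeq p t → ℝ)
    (i j : Fin 2) : Matrix (Fin t) (Fin t) ℝ :=
  (n : ℝ) • ∑ s : TrtSeq p t, w s • Chat S s i j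

/-- `C_{dij} = Ĉ_{dij} - n (∑_s p_s G_i(s) B_t)' B̃ (∑_s p_s G_j(s) B_t)`. -/
def CD {p t : ℕ} (n : ℕ) (S : Matrix (Fin p) (Fin p) ℝ) (w : TrtSeq p t → ℝ)
    (i j : Fin 2) : Matrix (Fin t) (Fin t) ℝ :=
  ChatD n S w i j -
    (n : ℝ) • ((∑ s : TrtSeq p t, w s • (Gmat i s * Bmat t))ᵀ * Btil S *
      (∑ s : TrtSeq p t, w s • (Gmat j s * Bmat t)))

/-- `c_{dij} = tr Ĉ_{dij} = n ∑_s p_s c_{sij}`. -/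
def cD {p t : ℕ} (n : ℕ) (S : Matrix (Fin p) (Fin p) ℝ) (w : TrtSeq p t → ℝ)
    (i j : Fin 2) : ℝ :=
  (ChatD n S w i j).trace

/-- Fisher information matrix `C_{d,τ0,λ0}` for the direct treatment effects under the
proportional model. -/
def CInfo {p t : ℕ} (n : ℕ) (S : Matrix (Fin p) (Fin p) ℝ) (w : TrtSeq p t → ℝ)
    (τ0 : Fin t → ℝ) (l0 : ℝ) : Matrix (Fin t) (Fin t) ℝ :=
  CD n S w 0 0 + l0 • (CD n S w 0 1 + CD n S w 1 0) + (l0 ^ 2) • CD n S w 1 1 -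
    (τ0 ⬝ᵥ (CD n S w 1 1 *ᵥ τ0))⁻¹ •
      ((CD n S w 0 1 + l0 • CD n S w 1 1) * vecMulVec τ0 τ0 *
        (CD n S w 1 0 + l0 • CD n S w 1 1))

/-- Permutation matrix `S_σ` with `(S_σ)_{j,i} = 1` iff `i = σ j`. -/
def Smat {t : ℕ} (σ : Equiv.Perm (Fin t)) : Matrix (Fin t) (Fin t) ℝ :=
  Matrix.of fun j i => if i = σ j then 1 else 0

/-- The relabelled sequence `σ ∘ s`. -/
def permSeq {p t : ℕ} (σ : Equiv.Perm (Fin t)) (s : TrtSeq p t) : TrtSeq p t := fun k => σ (s k)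

/-- The design `σ d`, with weights `(σd)_s = p_{σ⁻¹ ∘ s}`. -/
def permDesign {p t : ℕ} (σ : Equiv.Perm (Fin t)) (w : TrtSeq p t → ℝ) : TrtSeq p t → ℝ :=
  fun s => w (permSeq σ⁻¹ s)

/-- A design is symmetric if its weights are invariant under treatment relabelling. -/
def IsSymmetricDesign {p t : ℕ} (w : TrtSeq p t → ℝ) : Prop :=
  ∀ (σ : Equiv.Perm (Fin t)) (s : TrtSeq p t), w (permSeq σ s) = w s

/-- The symmetrized design `d*` with weights `p*_s = (1/t!) ∑_σ p_{σ⁻¹ ∘ s}`. -/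
def symmetrize {p t : ℕ} (w : TrtSeq p t → ℝ) : TrtSeq p t → ℝ :=
  fun s => ((Nat.factorial t : ℝ))⁻¹ * ∑ σ : Equiv.Perm (Fin t), permDesign σ w s

/-- `q_s(x) = c_{s11} + 2 c_{s12} x + c_{s22} x²`. -/
def qSeq {p t : ℕ} (S : Matrix (Fin p) (Fin p) ℝ) (s : TrtSeq p t) (x : ℝ) : ℝ :=
  cseq S s 0 0 + 2 * cseq S s 0 1 * x + cseq S s 1 1 * x ^ 2

/-- `q(x) = max_{s ∈ S} q_s(x)`. -/
def qMax (p t : ℕ) (S : Matrix (Fin p) (Fin p) ℝ) (x : ℝ) : ℝ :=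
  sSup (Set.range fun s : TrtSeq p t => qSeq S s x)

/-- `y* = inf_x q(x)`. -/
def yStar (p t : ℕ) (S : Matrix (Fin p) (Fin p) ℝ) : ℝ := ⨅ x : ℝ, qMax p t S x

/-- `q_d(x) = ∑_s p_s q_s(x)`. -/
def qD {p t : ℕ} (S : Matrix (Fin p) (Fin p) ℝ) (w : TrtSeq p t → ℝ) (x : ℝ) : ℝ :=
  ∑ s : TrtSeq p t, w s * qSeq S s x

/-- `x_d = -c_{d12}/c_{d22}`. -/
def xD {p t : ℕ} (n : ℕ) (S : Matrix (Fin p) (Fin p) ℝ) (w : TrtSeq p t → ℝ) : ℝ :=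
  -(cD n S w 0 1) / cD n S w 1 1

/-- An exchangeable prior: a probability measure on `{τ : 1'τ = 0, τ ≠ 0}` that is
invariant under all coordinate permutations of `ℝ^t`. -/
def IsExchangeablePrior {t : ℕ} (g : Measure (Fin t → ℝ)) : Prop :=
  IsProbabilityMeasure g ∧
    g {τ : Fin t → ℝ | ¬((∑ i, τ i) = 0 ∧ τ ≠ 0)} = 0 ∧
    ∀ σ : Equiv.Perm (Fin t), Measure.map (fun τ i => τ (σ i)) g = g

/-- `m_d(τ0) = min {ℓ' C_{d,τ0,λ0} ℓ : 1'ℓ = 0, ℓ'ℓ = 1}`. -/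
def mD {p t : ℕ} (n : ℕ) (S : Matrix (Fin p) (Fin p) ℝ) (w : TrtSeq p t → ℝ) (l0 : ℝ)
    (τ0 : Fin t → ℝ) : ℝ :=
  sInf {v : ℝ | ∃ l : Fin t → ℝ, (∑ i, l i) = 0 ∧ l ⬝ᵥ l = 1 ∧
    v = l ⬝ᵥ (CInfo n S w τ0 l0 *ᵥ l)}

/-- The E-criterion value `E_{g,λ0}(d) = ∫ m_d(τ0) g(dτ0)`. -/
def Ecrit {p t : ℕ} (n : ℕ) (S : Matrix (Fin p) (Fin p) ℝ) (g : Measure (Fin t → ℝ))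
    (l0 : ℝ) (w : TrtSeq p t → ℝ) : ℝ :=
  ∫ τ0, mD n S w l0 τ0 ∂g

/-- Competing designs for E-optimality: designs with a.e. positive `τ0' C_{d22} τ0`
and `g`-integrable `m_d`. -/
def EAdmissible {p t : ℕ} (n : ℕ) (S : Matrix (Fin p) (Fin p) ℝ) (g : Measure (Fin t → ℝ))
    (l0 : ℝ) (w : TrtSeq p t → ℝ) : Prop :=
  IsDesign w ∧ (∀ᵐ τ0 ∂g, 0 < τ0 ⬝ᵥ (CD n S w 1 1 *ᵥ τ0)) ∧
    Integrable (mD n S w l0) g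

/-- `d` is `E_{g,λ0}`-optimal. -/
def EOptimal {p t : ℕ} (n : ℕ) (S : Matrix (Fin p) (Fin p) ℝ) (g : Measure (Fin t → ℝ))
    (l0 : ℝ) (w : TrtSeq p t → ℝ) : Prop :=
  ∀ w' : TrtSeq p t → ℝ, EAdmissible n S g l0 w' → Ecrit n S g l0 w' ≤ Ecrit n S g l0 w

/-- A pseudo symmetric design: treatments equireplicated in each period,
and all `C_{dij}` completely symmetric. -/
def IsPseudoSymmetric {p t : ℕ} (n : ℕ) (S : Matrix (Fin p) (Fin p) ℝ)
    (w : TrtSeq p t → ℝ) : Prop :=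
  (∀ (k : Fin p) (i : Fin t),
    (∑ s ∈ Finset.univ.filter fun s : TrtSeq p t => s k = i, w s) = 1 / (t : ℝ)) ∧
  ∀ i j : Fin 2, ∃ a b : ℝ, CD n S w i j = a • (1 : Matrix (Fin t) (Fin t) ℝ) + b • Jmat t

/-- Eigenvalues of a (Hermitian) matrix sorted increasingly with multiplicity. -/
def sortedEigs {t : ℕ} (C : Matrix (Fin t) (Fin t) ℝ) : Fin t → ℝ :=
  if h : C.IsHermitian then (fun i => h.eigenvalues (Tuple.sort h.eigenvalues i))
  else fun _ => 0

/-- `Φ_D(C) = (∏_{i=1}^{t-1} a_i)^{1/(t-1)}` (eigenvalues sorted increasingly). -/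
def PhiD {t : ℕ} (C : Matrix (Fin t) (Fin t) ℝ) : ℝ :=
  (∏ i ∈ Finset.univ.filter fun i : Fin t => (i : ℕ) ≠ 0, sortedEigs C i) ^ (((t : ℝ) - 1)⁻¹)

/-- `Φ_A(C) = (t-1)(∑_{i=1}^{t-1} a_i⁻¹)⁻¹` if `a_1 > 0`, else `0`. -/
def PhiA {t : ℕ} (C : Matrix (Fin t) (Fin t) ℝ) : ℝ :=
  if ∀ i : Fin t, (i : ℕ) ≠ 0 → 0 < sortedEigs C i then
    ((t : ℝ) - 1) *
      (∑ i ∈ Finset.univ.filter fun i : Fin t => (i : ℕ) ≠ 0, (sortedEigs C i)⁻¹)⁻¹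
  else 0

/-- `Φ_T(C) = tr(C)/(t-1)`. -/
def PhiT {t : ℕ} (C : Matrix (Fin t) (Fin t) ℝ) : ℝ := C.trace / ((t : ℝ) - 1)

/-- The criterion value `∫ Φ(C_{d,τ0,λ0}) g(dτ0)`. -/
def PhiCrit {p t : ℕ} (n : ℕ) (S : Matrix (Fin p) (Fin p) ℝ)
    (Phi : Matrix (Fin t) (Fin t) ℝ → ℝ) (g : Measure (Fin t → ℝ)) (l0 : ℝ)
    (w : TrtSeq p t → ℝ) : ℝ :=
  ∫ τ0, Phi (CInfo n S w τ0 l0) ∂g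

/-- Competing designs for a `Φ`-criterion. -/
def PhiAdmissible {p t : ℕ} (n : ℕ) (S : Matrix (Fin p) (Fin p) ℝ)
    (Phi : Matrix (Fin t) (Fin t) ℝ → ℝ) (g : Measure (Fin t → ℝ)) (l0 : ℝ)
    (w : TrtSeq p t → ℝ) : Prop :=
  IsDesign w ∧ (∀ᵐ τ0 ∂g, 0 < τ0 ⬝ᵥ (CD n S w 1 1 *ᵥ τ0)) ∧
    Integrable (fun τ0 => Phi (CInfo n S w τ0 l0)) g

/-- `d` is `Φ_{g,λ0}`-optimal. -/
def PhiOptimal {p t : ℕ} (n : ℕ) (S : Matrix (Fin p) (Fin p) ℝ)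
    (Phi : Matrix (Fin t) (Fin t) ℝ → ℝ) (g : Measure (Fin t → ℝ)) (l0 : ℝ)
    (w : TrtSeq p t → ℝ) : Prop :=
  ∀ w' : TrtSeq p t → ℝ, PhiAdmissible n S Phi g l0 w' →
    PhiCrit n S Phi g l0 w' ≤ PhiCrit n S Phi g l0 w

/-- `H_1(s) = F_s`, `H_2(s) = T_s + λ0 F_s` (for estimating `λ`). -/
def Hmat {p t : ℕ} (l0 : ℝ) (i : Fin 2) (s : TrtSeq p t) : Matrix (Fin p) (Fin t) ℝ :=
  if i = 0 then Fmat s else Tmat s + l0 • Fmat s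

/-- `Â_{sij} = B_t H_i(s)' B̃ H_j(s) B_t`. -/
def Ahat {p t : ℕ} (S : Matrix (Fin p) (Fin p) ℝ) (l0 : ℝ) (s : TrtSeq p t) (i j : Fin 2) :
    Matrix (Fin t) (Fin t) ℝ :=
  Bmat t * (Hmat l0 i s)ᵀ * Btil S * Hmat l0 j s * Bmat t

/-- `h_{sij} = tr Â_{sij}`. -/
def hseq {p t : ℕ} (S : Matrix (Fin p) (Fin p) ℝ) (l0 : ℝ) (s : TrtSeq p t) (i j : Fin 2) : ℝ :=
  (Ahat S l0 s i j).trace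

/-- `Â_{dij} = n ∑_s p_s Â_{sij}`. -/
def AhatD {p t : ℕ} (n : ℕ) (S : Matrix (Fin p) (Fin p) ℝ) (l0 : ℝ) (w : TrtSeq p t → ℝ)
    (i j : Fin 2) : Matrix (Fin t) (Fin t) ℝ :=
  (n : ℝ) • ∑ s : TrtSeq p t, w s • Ahat S l0 s i j

/-- `A_{dij} = Â_{dij} - n (∑_s p_s H_i(s) B_t)' B̃ (∑_s p_s H_j(s) B_t)`. -/
def AD {p t : ℕ} (n : ℕ) (S : Matrix (Fin p) (Fin p) ℝ) (l0 : ℝ) (w : TrtSeq p t → ℝ)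
    (i j : Fin 2) : Matrix (Fin t) (Fin t) ℝ :=
  AhatD n S l0 w i j -
    (n : ℝ) • ((∑ s : TrtSeq p t, w s • (Hmat l0 i s * Bmat t))ᵀ * Btil S *
      (∑ s : TrtSeq p t, w s • (Hmat l0 j s * Bmat t)))

/-- `G` is a generalized inverse of `A`. -/
def IsGInv {t : ℕ} (A G : Matrix (Fin t) (Fin t) ℝ) : Prop := A * G * A = A

/-- `A_d(G) = A_{d11} - A_{d12} G A_{d21}` with `A_{d21} = A_{d12}'`. -/
def ADfun {p t : ℕ} (n : ℕ) (S : Matrix (Fin p) (Fin p) ℝ) (l0 : ℝ) (w : TrtSeq p t → ℝ)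
    (G : Matrix (Fin t) (Fin t) ℝ) : Matrix (Fin t) (Fin t) ℝ :=
  AD n S l0 w 0 0 - AD n S l0 w 0 1 * G * (AD n S l0 w 0 1)ᵀ

/-- `r_s(x) = h_{s11} + 2 h_{s12} x + h_{s22} x²`. -/
def rSeq {p t : ℕ} (S : Matrix (Fin p) (Fin p) ℝ) (l0 : ℝ) (s : TrtSeq p t) (x : ℝ) : ℝ :=
  hseq S l0 s 0 0 + 2 * hseq S l0 s 0 1 * x + hseq S l0 s 1 1 * x ^ 2

/-- `r(x) = max_s r_s(x)`. -/
def rMax (p t : ℕ) (S : Matrix (Fin p) (Fin p) ℝ) (l0 : ℝ) (x : ℝ) : ℝ :=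
  sSup (Set.range fun s : TrtSeq p t => rSeq S l0 s x)

/-- `y_0 = inf_x r(x)`. -/
def yZero (p t : ℕ) (S : Matrix (Fin p) (Fin p) ℝ) (l0 : ℝ) : ℝ := ⨅ x : ℝ, rMax p t S l0 x

lemma Bmat_apply (t : ℕ) (i j : Fin t) :
    Bmat t i j = (if i = j then 1 else 0) - (t : ℝ)⁻¹ := by
  simp [Bmat, Jmat, Matrix.one_apply]

lemma Bmat_transpose (t : ℕ) : (Bmat t)ᵀ = Bmat t := by
  ext i j
  simp [Bmat_apply, eq_comm]

lemma Bmat_mulVec {t : ℕ} (x : Fin t → ℝ) (hx : ∑ i, x i = 0) : Bmat t *ᵥ x = x := by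
  ext i
  simp [Matrix.mulVec, dotProduct, Bmat_apply, sub_mul, Finset.sum_sub_distrib,
    ← Finset.mul_sum, hx]

lemma Bmat_rowsum {t : ℕ} (ht : 3 ≤ t) (i : Fin t) : ∑ j, Bmat t i j = 0 := by
  have : (t : ℝ) ≠ 0 := by positivity
  simp [Bmat_apply, Finset.sum_sub_distrib, this]

lemma Bmat_mul_self {t : ℕ} (ht : 3 ≤ t) : Bmat t * Bmat t = Bmat t := by
  ext i j
  have h := congrFun (Bmat_mulVec (fun k => Bmat t k j) (by
    have := Bmat_rowsum ht j
    rw [← this]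
    refine Finset.sum_congr rfl fun k _ => ?_
    simp [Bmat_apply, eq_comm])) i
  simpa [Matrix.mul_apply, Matrix.mulVec, dotProduct] using h

lemma perm_inv {t : ℕ} (ht : 3 ≤ t) (M : Matrix (Fin t) (Fin t) ℝ)
    (h : ∀ (σ : Equiv.Perm (Fin t)) a b, M (σ a) (σ b) = M a b)
    (hr : ∀ a, ∑ b, M a b = 0) : M = (M.trace / ((t : ℝ) - 1)) • Bmat t := by
  have ht' : (3 : ℝ) ≤ t := by exact_mod_cast ht
  have h0 : (t : ℝ) ≠ 0 := by linarith
  have h1 : (t : ℝ) - 1 ≠ 0 := by linarith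
  have hd : ∀ a b, M a a = M b b := fun a b => by
    have := h (Equiv.swap a b) b b
    simpa using this
  have htr : ∀ a, M.trace = t * M a a := fun a => by
    rw [Matrix.trace, Finset.sum_congr rfl (fun b _ => show M.diag b = M a a from hd b a)]
    simp
  have hoff : ∀ a b, a ≠ b → M a a + (t - 1) * M a b = 0 := fun a b hab => by
    have h2 : ∀ c ∈ Finset.univ.erase a, M a c = M a b := fun c hc => by
      have hca : c ≠ a := Finset.ne_of_mem_erase hc
      have := h (Equiv.swap c b) a c
      rw [Equiv.swap_apply_of_ne_of_ne hca.symm hab, Equiv.swap_apply_left] at this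
      exact this.symm
    have h3 := hr a
    rw [← Finset.add_sum_erase _ _ (Finset.mem_univ a), Finset.sum_congr rfl h2] at h3
    simp only [Finset.sum_const, Finset.mem_univ, Finset.card_erase_of_mem, Finset.card_univ,
      Fintype.card_fin, nsmul_eq_mul] at h3
    rw [Nat.cast_sub (by omega)] at h3
    simpa using h3
  ext a b
  rw [Matrix.smul_apply, smul_eq_mul, Bmat_apply]
  by_cases hab : a = b
  · subst hab
    rw [htr a]
    simp
    field_simp
  · have h4 := hoff a b hab
    have h5 : M a b = - M a a / (t - 1) := by
      field_simp; linarith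
    rw [htr a, h5]
    simp [hab]
    field_simp

lemma Btil_transpose {p : ℕ} {S : Matrix (Fin p) (Fin p) ℝ} (hS : S.PosDef) :
    (Btil S)ᵀ = Btil S := by
  have h1 : (S⁻¹)ᵀ = S⁻¹ := by
    have := hS.inv.isHermitian
    simpa [Matrix.IsHermitian, Matrix.conjTranspose_eq_transpose_of_trivial] using this
  have h2 : (Jmat p)ᵀ = Jmat p := by ext; simp [Jmat]
  simp only [Btil, Matrix.transpose_sub, Matrix.transpose_smul, Matrix.transpose_mul, h1, h2,
    Matrix.mul_assoc]

lemma Btil_psd {p : ℕ} (hp : 2 ≤ p) {S : Matrix (Fin p) (Fin p) ℝ} (hS : S.PosDef) :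
    (Btil S).PosSemidef := by
  refine Matrix.PosSemidef.of_dotProduct_mulVec_nonneg ?_ ?_
  · rw [Matrix.IsHermitian, Matrix.conjTranspose_eq_transpose_of_trivial, Btil_transpose hS]
  intro x
  have hT : (S⁻¹)ᵀ = S⁻¹ := by
    have := hS.inv.isHermitian
    simpa [Matrix.IsHermitian, Matrix.conjTranspose_eq_transpose_of_trivial] using this
  set P := S⁻¹ with hP
  have hPp : P.PosDef := hS.inv
  set u : Fin p → ℝ := fun _ => 1 with hu
  have hune : u ≠ 0 := fun h => by
    have := congrFun h ⟨0, by omega⟩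
    simp [hu] at this
  have ha : 0 < u ⬝ᵥ (P *ᵥ u) := by simpa using hPp.dotProduct_mulVec_pos hune
  have hJ : Jmat p = vecMulVec u u := by ext; simp [Jmat, hu, vecMulVec_apply]
  have hsym : x ⬝ᵥ (P *ᵥ u) = u ⬝ᵥ (P *ᵥ x) := by
    rw [dotProduct_mulVec, ← mulVec_transpose, hT, dotProduct_comm]
  set a := u ⬝ᵥ (P *ᵥ u)
  set b := u ⬝ᵥ (P *ᵥ x)
  have h3 : x ⬝ᵥ (Btil S *ᵥ x) = x ⬝ᵥ (P *ᵥ x) - a⁻¹ * b ^ 2 := by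
    have h4 : Btil S = P - a⁻¹ • (P * vecMulVec u u * P) := by rw [Btil, hJ]
    rw [h4, sub_mulVec, dotProduct_sub, smul_mulVec, dotProduct_smul, ← mulVec_mulVec,
      ← mulVec_mulVec, vecMulVec_mulVec, mulVec_smul]
    simp only [op_smul_eq_smul, dotProduct_smul, smul_eq_mul]
    change _ - a⁻¹ * (b * (x ⬝ᵥ (P *ᵥ u))) = _
    rw [hsym]; ring
  have h5 := hPp.posSemidef.dotProduct_mulVec_nonneg (x - (b / a) • u)
  simp only [star_trivial, mulVec_sub, mulVec_smul, dotProduct_sub, sub_dotProduct,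
    smul_dotProduct, dotProduct_smul, smul_eq_mul] at h5
  rw [hsym] at h5
  change 0 ≤ x ⬝ᵥ (P *ᵥ x) - b / a * b - (b / a * (b - b / a * a)) at h5
  rw [star_trivial, h3]
  have : b / a * a = b := by field_simp
  rw [this] at h5
  have h6 : a⁻¹ * b ^ 2 = b / a * b := by field_simp
  rw [h6]; linarith

lemma Gmat_perm {p t : ℕ} (σ : Equiv.Perm (Fin t)) (s : TrtSeq p t) (i : Fin 2) (k : Fin p)
    (a : Fin t) : Gmat i (permSeq σ s) k (σ a) = Gmat i s k a := by
  unfold Gmat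
  split_ifs
  · simp [Tmat, permSeq]
  · simp [Fmat, permSeq]

lemma Bmat_perm {t : ℕ} (σ : Equiv.Perm (Fin t)) (a b : Fin t) :
    Bmat t (σ a) (σ b) = Bmat t a b := by simp [Bmat_apply]

lemma GB_perm {p t : ℕ} (σ : Equiv.Perm (Fin t)) (s : TrtSeq p t) (i : Fin 2) (k : Fin p)
    (a : Fin t) : (Gmat i (permSeq σ s) * Bmat t) k (σ a) = (Gmat i s * Bmat t) k a := by
  rw [Matrix.mul_apply, Matrix.mul_apply, ← Equiv.sum_comp σ]
  simp only [Gmat_perm, Bmat_perm]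

lemma Chat_eq {p t : ℕ} (S : Matrix (Fin p) (Fin p) ℝ) (s : TrtSeq p t) (i j : Fin 2) :
    Chat S s i j = (Gmat i s * Bmat t)ᵀ * Btil S * (Gmat j s * Bmat t) := by
  simp only [Chat, Matrix.transpose_mul, Bmat_transpose, Matrix.mul_assoc]

lemma Chat_perm {p t : ℕ} (S : Matrix (Fin p) (Fin p) ℝ) (σ : Equiv.Perm (Fin t))
    (s : TrtSeq p t) (i j : Fin 2) (a b : Fin t) :
    Chat S (permSeq σ s) i j (σ a) (σ b) = Chat S s i j a b := by
  have key : ∀ (A A' : Matrix (Fin p) (Fin t) ℝ) (x y : Fin t),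
      (Aᵀ * Btil S * A') x y = ∑ l, (∑ k, A k x * Btil S k l) * A' l y := by
    intro A A' x y
    simp [Matrix.mul_apply]
  rw [Chat_eq, Chat_eq, key, key]
  simp only [GB_perm]

lemma cseq_perm {p t : ℕ} (S : Matrix (Fin p) (Fin p) ℝ) (σ : Equiv.Perm (Fin t))
    (s : TrtSeq p t) (i j : Fin 2) : cseq S (permSeq σ s) i j = cseq S s i j := by
  simp only [cseq, Matrix.trace, Matrix.diag]
  rw [← Equiv.sum_comp σ]
  simp only [Chat_perm]

lemma Chat_transpose {p t : ℕ} {S : Matrix (Fin p) (Fin p) ℝ} (hS : S.PosDef)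
    (s : TrtSeq p t) (i j : Fin 2) : (Chat S s i j)ᵀ = Chat S s j i := by
  rw [Chat_eq, Chat_eq]
  simp only [Matrix.transpose_mul, Matrix.transpose_transpose, Btil_transpose hS,
    Matrix.mul_assoc]

lemma cseq_symm {p t : ℕ} {S : Matrix (Fin p) (Fin p) ℝ} (hS : S.PosDef)
    (s : TrtSeq p t) (i j : Fin 2) : cseq S s i j = cseq S s j i := by
  rw [cseq, cseq, ← Chat_transpose hS, Matrix.trace_transpose]

lemma cseq_nonneg {p t : ℕ} (hp : 2 ≤ p) {S : Matrix (Fin p) (Fin p) ℝ} (hS : S.PosDef)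
    (s : TrtSeq p t) (i : Fin 2) : 0 ≤ cseq S s i i := by
  rw [cseq, Chat_eq, ← Matrix.conjTranspose_eq_transpose_of_trivial]
  exact ((Btil_psd hp hS).conjTranspose_mul_mul_same _).trace_nonneg

lemma cD_eq {p t : ℕ} (n : ℕ) (S : Matrix (Fin p) (Fin p) ℝ) (w : TrtSeq p t → ℝ)
    (i j : Fin 2) : cD n S w i j = n * ∑ s, w s * cseq S s i j := by
  simp [cD, ChatD, cseq, Matrix.trace_sum]

lemma cD_symm {p t : ℕ} (n : ℕ) {S : Matrix (Fin p) (Fin p) ℝ} (hS : S.PosDef)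
    (w : TrtSeq p t → ℝ) (i j : Fin 2) : cD n S w i j = cD n S w j i := by
  rw [cD_eq, cD_eq]
  simp only [cseq_symm hS _ i j]

lemma ChatD_transpose {p t : ℕ} (n : ℕ) {S : Matrix (Fin p) (Fin p) ℝ} (hS : S.PosDef)
    (w : TrtSeq p t → ℝ) (i j : Fin 2) : (ChatD n S w i j)ᵀ = ChatD n S w j i := by
  simp only [ChatD, Matrix.transpose_smul, Matrix.transpose_sum, Chat_transpose hS]

lemma CD_transpose {p t : ℕ} (n : ℕ) {S : Matrix (Fin p) (Fin p) ℝ} (hS : S.PosDef)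
    (w : TrtSeq p t → ℝ) (i j : Fin 2) : (CD n S w i j)ᵀ = CD n S w j i := by
  rw [CD, CD, Matrix.transpose_sub, ChatD_transpose n hS, Matrix.transpose_smul]
  simp only [Matrix.transpose_mul, Matrix.transpose_transpose, Btil_transpose hS,
    Matrix.mul_assoc]

lemma ChatD_mul_B {p t : ℕ} (ht : 3 ≤ t) (n : ℕ) (S : Matrix (Fin p) (Fin p) ℝ)
    (w : TrtSeq p t → ℝ) (i j : Fin 2) : ChatD n S w i j * Bmat t = ChatD n S w i j := by
  rw [ChatD, Matrix.smul_mul, Matrix.sum_mul]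
  congr 1
  refine Finset.sum_congr rfl fun s _ => ?_
  rw [Matrix.smul_mul, Chat, Matrix.mul_assoc _ (Bmat t) (Bmat t), Bmat_mul_self ht]

lemma ChatD_rowsum {p t : ℕ} (ht : 3 ≤ t) (n : ℕ) (S : Matrix (Fin p) (Fin p) ℝ)
    (w : TrtSeq p t → ℝ) (i j : Fin 2) (a : Fin t) : ∑ b, ChatD n S w i j a b = 0 := by
  rw [← ChatD_mul_B ht]
  simp only [Matrix.mul_apply]
  rw [Finset.sum_comm]
  simp only [← Finset.mul_sum, Bmat_rowsum ht, mul_zero, Finset.sum_const_zero]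

/-- Balanced designs. -/
def GoodD {p t : ℕ} (n : ℕ) (S : Matrix (Fin p) (Fin p) ℝ) (w : TrtSeq p t → ℝ) : Prop :=
  (∀ i, ∑ s : TrtSeq p t, w s • (Gmat i s * Bmat t) = 0) ∧
  ∀ i j, ChatD n S w i j = (cD n S w i j / ((t : ℝ) - 1)) • Bmat t

lemma GoodD.CD_eq {p t n : ℕ} {S : Matrix (Fin p) (Fin p) ℝ} {w : TrtSeq p t → ℝ}
    (h : GoodD n S w) (i j : Fin 2) :
    CD n S w i j = (cD n S w i j / ((t : ℝ) - 1)) • Bmat t := by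
  rw [CD, h.1 j, ← h.2]
  simp

lemma row_const_mul_B {p t : ℕ} (ht : 3 ≤ t) (N : Matrix (Fin p) (Fin t) ℝ)
    (h : ∀ k a b, N k a = N k b) : N * Bmat t = 0 := by
  ext k a
  rw [Matrix.mul_apply, Finset.sum_congr rfl (fun b _ => by rw [h k b a]), ← Finset.mul_sum]
  have : ∑ b, Bmat t b a = 0 := by
    rw [← Bmat_rowsum ht a]
    refine Finset.sum_congr rfl fun k _ => ?_
    simp [Bmat_apply, eq_comm]
  rw [this]; simp

lemma good_of_ps {p t n : ℕ} (ht : 3 ≤ t) {S : Matrix (Fin p) (Fin p) ℝ} {w : TrtSeq p t → ℝ}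
    (h : IsPseudoSymmetric n S w) : GoodD n S w := by
  have h1 : ∀ i, ∑ s : TrtSeq p t, w s • (Gmat i s * Bmat t) = 0 := by
    intro i
    have : ∑ s : TrtSeq p t, w s • (Gmat i s * Bmat t)
        = (∑ s : TrtSeq p t, w s • Gmat i s) * Bmat t := by
      rw [Matrix.sum_mul]; simp only [Matrix.smul_mul]
    rw [this]
    apply row_const_mul_B ht
    have key : ∀ (k : Fin p) (a : Fin t), ∑ s : TrtSeq p t, w s * (if s k = a then 1 else 0)
        = 1 / t := by
      intro k a
      rw [← h.1 k a, Finset.sum_filter]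
      simp
    intro k a b
    simp only [Matrix.sum_apply, Matrix.smul_apply, smul_eq_mul, Gmat]
    by_cases hi : i = 0
    · simp only [hi, if_true, Tmat, Matrix.of_apply]
      rw [key, key]
    · simp only [hi, if_false, Fmat, Matrix.of_apply]
      by_cases hk : (k : ℕ) = 0
      · simp [hk]
      · simp only [hk, if_false]
        rw [key, key]
  refine ⟨h1, fun i j => ?_⟩
  have hC : CD n S w i j = ChatD n S w i j := by rw [CD, h1 j]; simp
  obtain ⟨a, b, hab⟩ := h.2 i j
  apply perm_inv ht
  · intro σ x y
    rw [← hC, hab]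
    simp [Jmat, Matrix.one_apply]
  · exact ChatD_rowsum ht n S w i j

/-- uniform design on the orbit of `s`. -/
def orb {p t : ℕ} (s : TrtSeq p t) : TrtSeq p t → ℝ := fun s' =>
  ((Nat.factorial t : ℝ))⁻¹ * ∑ σ : Equiv.Perm (Fin t), if permSeq σ s = s' then 1 else 0

lemma orb_sum {p t : ℕ} {E : Type*} [AddCommGroup E] [Module ℝ E] (s : TrtSeq p t)
    (f : TrtSeq p t → E) :
    ∑ s', orb s s' • f s' = ((Nat.factorial t : ℝ))⁻¹ • ∑ σ : Equiv.Perm (Fin t),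
      f (permSeq σ s) := by
  simp only [orb, mul_smul, ← Finset.smul_sum, Finset.sum_smul]
  rw [Finset.sum_comm]
  simp [ite_smul]

lemma permSeq_mul {p t : ℕ} (σ π : Equiv.Perm (Fin t)) (s : TrtSeq p t) :
    permSeq (σ * π) s = permSeq σ (permSeq π s) := rfl

lemma cD_orb {p t : ℕ} (n : ℕ) (S : Matrix (Fin p) (Fin p) ℝ) (s : TrtSeq p t) (i j : Fin 2) :
    cD n S (orb s) i j = n * cseq S s i j := by
  have h := orb_sum s (fun s' => cseq S s' i j)
  simp only [smul_eq_mul] at h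
  rw [cD_eq, h]
  have : (Nat.factorial t : ℝ) ≠ 0 := by positivity
  simp [cseq_perm, Fintype.card_perm, this]

lemma good_orb {p t n : ℕ} (ht : 3 ≤ t) (S : Matrix (Fin p) (Fin p) ℝ) (s : TrtSeq p t) :
    GoodD n S (orb s) := by
  constructor
  · intro i
    have : ∑ s' : TrtSeq p t, orb s s' • (Gmat i s' * Bmat t)
        = (∑ s' : TrtSeq p t, orb s s' • Gmat i s') * Bmat t := by
      rw [Matrix.sum_mul]; simp only [Matrix.smul_mul]
    rw [this]
    apply row_const_mul_B ht
    have key : ∀ k (π : Equiv.Perm (Fin t)) a, (∑ s' : TrtSeq p t, orb s s' • Gmat i s') k (π a)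
        = (∑ s' : TrtSeq p t, orb s s' • Gmat i s') k a := by
      intro k π a
      rw [orb_sum]
      simp only [Matrix.smul_apply, Matrix.sum_apply]
      congr 1
      rw [← Equiv.sum_comp (Equiv.mulLeft π)]
      simp only [Equiv.coe_mulLeft, permSeq_mul, Gmat_perm]
    intro k a b
    have := key k (Equiv.swap b a) b
    simpa using this
  · intro i j
    apply perm_inv ht
    · intro π a b
      rw [ChatD, orb_sum]
      simp only [Matrix.smul_apply, Matrix.sum_apply]
      congr 2
      rw [← Equiv.sum_comp (Equiv.mulLeft π)]
      simp only [Equiv.coe_mulLeft, permSeq_mul, Chat_perm]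
    · exact ChatD_rowsum ht n S _ i j

lemma design_orb {p t : ℕ} (s : TrtSeq p t) : IsDesign (orb s) := by
  constructor
  · intro s'
    unfold orb
    refine mul_nonneg (by positivity) (Finset.sum_nonneg fun σ _ => ?_)
    split_ifs <;> norm_num
  · have h := orb_sum s (fun _ => (1 : ℝ))
    have : (Nat.factorial t : ℝ) ≠ 0 := by positivity
    simpa [Fintype.card_perm, this] using h

/-- mixture -/
def mix {p t : ℕ} (e : ℝ) (w v : TrtSeq p t → ℝ) : TrtSeq p t → ℝ :=
  fun s => (1 - e) * w s + e * v s

lemma mix_sum {p t : ℕ} {E : Type*} [AddCommGroup E] [Module ℝ E] (e : ℝ)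
    (w v : TrtSeq p t → ℝ) (f : TrtSeq p t → E) :
    ∑ s, mix e w v s • f s = (1 - e) • ∑ s, w s • f s + e • ∑ s, v s • f s := by
  simp only [mix, add_smul, mul_smul, Finset.sum_add_distrib, Finset.smul_sum]

lemma cD_mix {p t : ℕ} (n : ℕ) (S : Matrix (Fin p) (Fin p) ℝ) (e : ℝ)
    (w v : TrtSeq p t → ℝ) (i j : Fin 2) :
    cD n S (mix e w v) i j = (1 - e) * cD n S w i j + e * cD n S v i j := by
  have h := mix_sum e w v (fun s' => cseq S s' i j)
  simp only [smul_eq_mul] at h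
  rw [cD_eq, h, cD_eq, cD_eq]; ring

lemma good_mix {p t n : ℕ} {S : Matrix (Fin p) (Fin p) ℝ} (e : ℝ)
    {w v : TrtSeq p t → ℝ} (hw : GoodD n S w) (hv : GoodD n S v) : GoodD n S (mix e w v) := by
  constructor
  · intro i
    rw [mix_sum, hw.1, hv.1]; simp
  · intro i j
    have h : ChatD n S (mix e w v) i j = (1 - e) • ChatD n S w i j + e • ChatD n S v i j := by
      rw [ChatD, mix_sum, ChatD, ChatD]; module
    rw [h, hw.2, hv.2, cD_mix, smul_smul, smul_smul, ← add_smul]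
    congr 1; ring

lemma design_mix {p t : ℕ} {e : ℝ} (h0 : 0 ≤ e) (h1 : e ≤ 1)
    {w v : TrtSeq p t → ℝ} (hw : IsDesign w) (hv : IsDesign v) : IsDesign (mix e w v) := by
  constructor
  · intro s
    exact add_nonneg (mul_nonneg (by linarith) (hw.1 s)) (mul_nonneg h0 (hv.1 s))
  · have h := mix_sum e w v (fun _ => (1 : ℝ))
    simp only [smul_eq_mul, mul_one, hw.2, hv.2] at h
    rw [h]; ring

lemma CInfo_quad {p t : ℕ} (n : ℕ) (S : Matrix (Fin p) (Fin p) ℝ) (w : TrtSeq p t → ℝ)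
    (τ l : Fin t → ℝ) (l0 : ℝ) :
    l ⬝ᵥ (CInfo n S w τ l0 *ᵥ l) =
      l ⬝ᵥ (CD n S w 0 0 *ᵥ l) + l0 * (l ⬝ᵥ (CD n S w 0 1 *ᵥ l) + l ⬝ᵥ (CD n S w 1 0 *ᵥ l))
        + l0 ^ 2 * (l ⬝ᵥ (CD n S w 1 1 *ᵥ l))
        - (τ ⬝ᵥ (CD n S w 1 1 *ᵥ τ))⁻¹ *
          ((l ⬝ᵥ (CD n S w 0 1 *ᵥ τ) + l0 * (l ⬝ᵥ (CD n S w 1 1 *ᵥ τ))) *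
          (τ ⬝ᵥ (CD n S w 1 0 *ᵥ l) + l0 * (τ ⬝ᵥ (CD n S w 1 1 *ᵥ l)))) := by
  simp only [CInfo, sub_mulVec, add_mulVec, smul_mulVec, dotProduct_sub, dotProduct_add,
    dotProduct_smul, smul_eq_mul, ← mulVec_mulVec, vecMulVec_mulVec, mulVec_smul, op_smul_eq_smul]
  ring

lemma cs_dot {t : ℕ} (l τ : Fin t → ℝ) : (l ⬝ᵥ τ) ^ 2 ≤ (l ⬝ᵥ l) * (τ ⬝ᵥ τ) := by
  have := Finset.sum_mul_sq_le_sq_mul_sq Finset.univ l τ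
  simpa [dotProduct, sq] using this

lemma dot_self_pos {t : ℕ} {τ : Fin t → ℝ} (h : τ ≠ 0) : 0 < τ ⬝ᵥ τ := by
  have h1 : 0 ≤ τ ⬝ᵥ τ := Finset.sum_nonneg fun i _ => mul_self_nonneg _
  exact lt_of_le_of_ne h1 (fun h2 => h (dotProduct_self_eq_zero.1 h2.symm))

/-- normalised vector -/
lemma exists_unit {t : ℕ} {τ : Fin t → ℝ} (h0 : ∑ i, τ i = 0) (h : τ ≠ 0) :
    ∃ r : ℝ, r ^ 2 = (τ ⬝ᵥ τ)⁻¹ ∧ (∑ i, (r • τ) i) = 0 ∧ (r • τ) ⬝ᵥ (r • τ) = 1 := by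
  have hD := dot_self_pos h
  have hr : (Real.sqrt (τ ⬝ᵥ τ)⁻¹) ^ 2 = (τ ⬝ᵥ τ)⁻¹ := Real.sq_sqrt (by positivity)
  refine ⟨Real.sqrt (τ ⬝ᵥ τ)⁻¹, hr, ?_, ?_⟩
  · simp [← Finset.mul_sum, h0]
  · rw [smul_dotProduct, dotProduct_smul, smul_eq_mul, smul_eq_mul, ← mul_assoc, ← sq, hr]
    exact inv_mul_cancel₀ hD.ne'

lemma GoodD.quad {p t n : ℕ} {S : Matrix (Fin p) (Fin p) ℝ} {w : TrtSeq p t → ℝ}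
    (h : GoodD n S w) (i j : Fin 2) (l m : Fin t → ℝ) (hm : ∑ i, m i = 0) :
    l ⬝ᵥ (CD n S w i j *ᵥ m) = cD n S w i j / ((t : ℝ) - 1) * (l ⬝ᵥ m) := by
  rw [h.CD_eq, smul_mulVec, Bmat_mulVec m hm, dotProduct_smul, smul_eq_mul]

lemma alg1 (a b c N D y l0 : ℝ) (hc : c ≠ 0) (hN : N ≠ 0) (hD : D ≠ 0) :
    a / N * 1 + l0 * (b / N * 1 + b / N * 1) + l0 ^ 2 * (c / N * 1) - (c / N * D)⁻¹ *
      ((b / N * y + l0 * (c / N * y)) * (b / N * y + l0 * (c / N * y))) =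
    (a - b ^ 2 / c) / N + (b + l0 * c) ^ 2 / c / N * (1 - y ^ 2 / D) := by
  field_simp
  ring

lemma alg2 (A b c x l0 : ℝ) (hpos : 0 < c) :
    A + l0 * (b + b) + l0 ^ 2 * c - c⁻¹ * ((b + l0 * c) * (b + l0 * c)) ≤
      A + 2 * x * b + x ^ 2 * c := by
  have h3 : A + 2 * x * b + x ^ 2 * c - (A + l0 * (b + b) + l0 ^ 2 * c
      - c⁻¹ * ((b + l0 * c) * (b + l0 * c))) = (b + x * c) ^ 2 / c := by
    have := hpos.ne'
    field_simp
    ring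
  have h4 : 0 ≤ (b + x * c) ^ 2 / c := by positivity
  linarith

lemma mD_good {p t n : ℕ} (ht : 3 ≤ t) {S : Matrix (Fin p) (Fin p) ℝ} (hS : S.PosDef)
    {w : TrtSeq p t → ℝ} (h : GoodD n S w) (hc : 0 < cD n S w 1 1) (l0 : ℝ)
    {τ : Fin t → ℝ} (h0 : ∑ i, τ i = 0) (hτ : τ ≠ 0) :
    mD n S w l0 τ =
      (cD n S w 0 0 - (cD n S w 0 1) ^ 2 / cD n S w 1 1) / ((t : ℝ) - 1) := by
  have ht' : (3 : ℝ) ≤ t := by exact_mod_cast ht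
  have hN : 0 < (t : ℝ) - 1 := by linarith
  have hD := dot_self_pos hτ
  have key : ∀ l : Fin t → ℝ, ∑ i, l i = 0 → l ⬝ᵥ l = 1 → l ⬝ᵥ (CInfo n S w τ l0 *ᵥ l) =
      (cD n S w 0 0 - (cD n S w 0 1) ^ 2 / cD n S w 1 1) / ((t : ℝ) - 1) +
      (cD n S w 0 1 + l0 * cD n S w 1 1) ^ 2 / cD n S w 1 1 / ((t : ℝ) - 1) *
        (1 - (l ⬝ᵥ τ) ^ 2 / (τ ⬝ᵥ τ)) := by
    intro l hl hl1
    rw [CInfo_quad, h.quad 0 0 l l hl, h.quad 0 1 l l hl, h.quad 1 0 l l hl, h.quad 1 1 l l hl,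
      h.quad 1 1 τ τ h0, h.quad 0 1 l τ h0, h.quad 1 1 l τ h0, h.quad 1 0 τ l hl,
      h.quad 1 1 τ l hl, cD_symm n hS w 1 0, dotProduct_comm τ l, hl1]
    exact alg1 _ _ _ _ _ _ _ hc.ne' hN.ne' hD.ne'
  apply IsLeast.csInf_eq
  constructor
  · obtain ⟨r, hr, hr0, hr1⟩ := exists_unit h0 hτ
    refine ⟨r • τ, hr0, hr1, ?_⟩
    rw [key _ hr0 hr1]
    have : (r • τ ⬝ᵥ τ) ^ 2 / (τ ⬝ᵥ τ) = 1 := by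
      rw [smul_dotProduct, smul_eq_mul, mul_pow, hr]
      field_simp
    rw [this]; ring
  · rintro v ⟨l, hl, hl1, rfl⟩
    rw [key l hl hl1]
    have h1 := cs_dot l τ
    rw [hl1, one_mul] at h1
    have h2 : (l ⬝ᵥ τ) ^ 2 / (τ ⬝ᵥ τ) ≤ 1 := (div_le_one hD).2 h1
    have h3 : 0 ≤ (cD n S w 0 1 + l0 * cD n S w 1 1) ^ 2 / cD n S w 1 1 / ((t : ℝ) - 1) :=
      div_nonneg (div_nonneg (sq_nonneg _) hc.le) hN.le
    exact le_add_of_nonneg_right (mul_nonneg h3 (sub_nonneg.2 h2))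

lemma ae_prior {t : ℕ} {g : Measure (Fin t → ℝ)} (hg : IsExchangeablePrior g) :
    ∀ᵐ τ ∂g, (∑ i, τ i) = 0 ∧ τ ≠ 0 := by
  rw [ae_iff]; exact hg.2.1

lemma good_adm {p t n : ℕ} (ht : 3 ≤ t) {S : Matrix (Fin p) (Fin p) ℝ} (hS : S.PosDef)
    {g : Measure (Fin t → ℝ)} (hg : IsExchangeablePrior g)
    {w : TrtSeq p t → ℝ} (hw : IsDesign w)
    (h : GoodD n S w) (hc : 0 < cD n S w 1 1) (l0 : ℝ) :
    EAdmissible n S g l0 w ∧ Ecrit n S g l0 w =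
      (cD n S w 0 0 - (cD n S w 0 1) ^ 2 / cD n S w 1 1) / ((t : ℝ) - 1) := by
  have ht' : (3 : ℝ) ≤ t := by exact_mod_cast ht
  have hN : 0 < (t : ℝ) - 1 := by linarith
  have := hg.1
  have hae : mD n S w l0 =ᵐ[g] fun _ =>
      (cD n S w 0 0 - (cD n S w 0 1) ^ 2 / cD n S w 1 1) / ((t : ℝ) - 1) := by
    filter_upwards [ae_prior hg] with τ hτ
    exact mD_good ht hS h hc l0 hτ.1 hτ.2
  refine ⟨⟨hw, ?_, ?_⟩, ?_⟩
  · filter_upwards [ae_prior hg] with τ hτ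
    rw [h.quad _ _ _ _ hτ.1]
    have := dot_self_pos hτ.2
    positivity
  · exact (integrable_const _).congr hae.symm
  · rw [Ecrit, integral_congr_ae hae]; simp

lemma quad_bddBelow {t : ℕ} (M : Matrix (Fin t) (Fin t) ℝ) :
    BddBelow {v : ℝ | ∃ l : Fin t → ℝ, (∑ i, l i) = 0 ∧ l ⬝ᵥ l = 1 ∧ v = l ⬝ᵥ (M *ᵥ l)} := by
  refine ⟨-∑ i, ∑ j, |M i j|, ?_⟩
  rintro v ⟨l, -, hl, rfl⟩
  have hl1 : ∀ i, |l i| ≤ 1 := fun i => by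
    have h1 : l i * l i ≤ l ⬝ᵥ l :=
      Finset.single_le_sum (f := fun i => l i * l i) (fun j _ => mul_self_nonneg _)
        (Finset.mem_univ i)
    rw [hl] at h1
    exact abs_le_one_iff_mul_self_le_one.2 h1
  have h2 : l ⬝ᵥ (M *ᵥ l) = ∑ i, ∑ j, l i * (M i j * l j) := by
    simp [dotProduct, mulVec, Finset.mul_sum]
  rw [h2, ← Finset.sum_neg_distrib]
  refine Finset.sum_le_sum fun i _ => ?_
  rw [← Finset.sum_neg_distrib]
  refine Finset.sum_le_sum fun j _ => ?_
  have h3 : |l i * (M i j * l j)| ≤ |M i j| := by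
    rw [abs_mul, abs_mul]
    have := hl1 i
    have := hl1 j
    calc |l i| * (|M i j| * |l j|) ≤ 1 * (|M i j| * 1) := by gcongr
      _ = _ := by ring
  linarith [neg_abs_le (l i * (M i j * l j))]

/-- the combined matrix. -/
def Qmat {p t : ℕ} (n : ℕ) (S : Matrix (Fin p) (Fin p) ℝ) (w : TrtSeq p t → ℝ) (x : ℝ) :
    Matrix (Fin t) (Fin t) ℝ :=
  ChatD n S w 0 0 + x • (ChatD n S w 0 1 + ChatD n S w 1 0) + x ^ 2 • ChatD n S w 1 1

lemma quad_le {p t n : ℕ} (hp : 2 ≤ p) {S : Matrix (Fin p) (Fin p) ℝ} (hS : S.PosDef)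
    (w : TrtSeq p t → ℝ) (x : ℝ) (τ : Fin t → ℝ) :
    τ ⬝ᵥ (CD n S w 0 0 *ᵥ τ) + 2 * x * (τ ⬝ᵥ (CD n S w 0 1 *ᵥ τ)) +
      x ^ 2 * (τ ⬝ᵥ (CD n S w 1 1 *ᵥ τ)) ≤ τ ⬝ᵥ (Qmat n S w x *ᵥ τ) := by
  set N : Fin 2 → Matrix (Fin p) (Fin t) ℝ := fun i =>
    ∑ s : TrtSeq p t, w s • (Gmat i s * Bmat t) with hN
  have hs : τ ⬝ᵥ (CD n S w 1 0 *ᵥ τ) = τ ⬝ᵥ (CD n S w 0 1 *ᵥ τ) := by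
    rw [← CD_transpose n hS w 0 1, mulVec_transpose, dotProduct_comm, ← dotProduct_mulVec]
  have hQ : CD n S w 0 0 + x • (CD n S w 0 1 + CD n S w 1 0) + x ^ 2 • CD n S w 1 1
      = Qmat n S w x - (n : ℝ) • ((N 0 + x • N 1)ᵀ * Btil S * (N 0 + x • N 1)) := by
    have hCD : ∀ i j, CD n S w i j = ChatD n S w i j - (n : ℝ) • ((N i)ᵀ * Btil S * N j) :=
      fun i j => rfl
    simp only [hCD, Qmat, Matrix.transpose_add, Matrix.transpose_smul, Matrix.add_mul,
      Matrix.mul_add, Matrix.smul_mul, Matrix.mul_smul]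
    module
  have hpsd := ((Btil_psd hp hS).conjTranspose_mul_mul_same
    (N 0 + x • N 1)).dotProduct_mulVec_nonneg τ
  rw [Matrix.conjTranspose_eq_transpose_of_trivial, star_trivial] at hpsd
  have h2 := congrArg (fun M => τ ⬝ᵥ (M *ᵥ τ)) hQ
  simp only [sub_mulVec, add_mulVec, smul_mulVec, dotProduct_sub, dotProduct_add,
    dotProduct_smul, smul_eq_mul, hs] at h2
  have h3 : 0 ≤ (n : ℝ) * (τ ⬝ᵥ (((N 0 + x • N 1)ᵀ * Btil S * (N 0 + x • N 1)) *ᵥ τ)) :=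
    mul_nonneg (by positivity) hpsd
  linarith

lemma mD_le {p t n : ℕ} (hp : 2 ≤ p) {S : Matrix (Fin p) (Fin p) ℝ} (hS : S.PosDef)
    (w : TrtSeq p t → ℝ) (x l0 : ℝ) {τ : Fin t → ℝ} (h0 : ∑ i, τ i = 0) (hτ : τ ≠ 0)
    (hpos : 0 < τ ⬝ᵥ (CD n S w 1 1 *ᵥ τ)) :
    mD n S w l0 τ ≤ (τ ⬝ᵥ τ)⁻¹ * (τ ⬝ᵥ (Qmat n S w x *ᵥ τ)) := by
  obtain ⟨r, hr, hr0, hr1⟩ := exists_unit h0 hτ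
  have hD := dot_self_pos hτ
  have h1 : mD n S w l0 τ ≤ (r • τ) ⬝ᵥ (CInfo n S w τ l0 *ᵥ (r • τ)) :=
    csInf_le (quad_bddBelow _) ⟨r • τ, hr0, hr1, rfl⟩
  have h2 : (r • τ) ⬝ᵥ (CInfo n S w τ l0 *ᵥ (r • τ)) =
      (τ ⬝ᵥ τ)⁻¹ * (τ ⬝ᵥ (CInfo n S w τ l0 *ᵥ τ)) := by
    rw [smul_dotProduct, mulVec_smul, dotProduct_smul, smul_eq_mul, smul_eq_mul, ← hr]; ring
  rw [h2] at h1
  refine h1.trans (mul_le_mul_of_nonneg_left ?_ (by positivity))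
  refine le_trans ?_ (quad_le hp hS w x τ)
  have hs : τ ⬝ᵥ (CD n S w 1 0 *ᵥ τ) = τ ⬝ᵥ (CD n S w 0 1 *ᵥ τ) := by
    rw [← CD_transpose n hS w 0 1, mulVec_transpose, dotProduct_comm, ← dotProduct_mulVec]
  rw [CInfo_quad, hs]
  exact alg2 _ _ _ _ _ hpos

lemma ratio_int {t : ℕ} {g : Measure (Fin t → ℝ)} [IsProbabilityMeasure g] (i j : Fin t) :
    Integrable (fun τ : Fin t → ℝ => (τ ⬝ᵥ τ)⁻¹ * (τ i * τ j)) g := by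
  have hm : Measurable (fun τ : Fin t → ℝ => (τ ⬝ᵥ τ)⁻¹ * (τ i * τ j)) := by
    unfold dotProduct
    fun_prop
  refine Integrable.of_bound hm.aestronglyMeasurable 1 (Filter.Eventually.of_forall fun τ => ?_)
  by_cases hτ : τ = 0
  · simp [hτ]
  have hD := dot_self_pos hτ
  have hle : ∀ i, τ i * τ i ≤ τ ⬝ᵥ τ := fun i =>
    Finset.single_le_sum (f := fun i => τ i * τ i) (fun j _ => mul_self_nonneg _)
        (Finset.mem_univ i)
  rw [Real.norm_eq_abs, abs_mul, abs_of_pos (inv_pos.2 hD), inv_mul_le_iff₀ hD, mul_one]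
  have := hle i
  have := hle j
  rw [abs_le]
  constructor <;> nlinarith [sq_nonneg (τ i - τ j), sq_nonneg (τ i + τ j)]

lemma prior_moment {t : ℕ} (ht : 3 ≤ t) {g : Measure (Fin t → ℝ)} (hg : IsExchangeablePrior g)
    (i j : Fin t) :
    ∫ τ : Fin t → ℝ, (τ ⬝ᵥ τ)⁻¹ * (τ i * τ j) ∂g = 1 / ((t : ℝ) - 1) * Bmat t i j := by
  have := hg.1
  set M : Matrix (Fin t) (Fin t) ℝ :=
    Matrix.of fun i j => ∫ τ : Fin t → ℝ, (τ ⬝ᵥ τ)⁻¹ * (τ i * τ j) ∂g with hM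
  have htr : M.trace = 1 := by
    simp only [Matrix.trace, Matrix.diag, hM, Matrix.of_apply]
    rw [← integral_finsetSum _ fun i _ => ratio_int i i]
    rw [integral_congr_ae (g := fun _ => (1 : ℝ))]
    · simp
    · filter_upwards [ae_prior hg] with τ hτ
      rw [← Finset.mul_sum]
      exact inv_mul_cancel₀ (dot_self_pos hτ.2).ne'
  have h1 := perm_inv ht M (by
    intro σ a b
    simp only [hM, Matrix.of_apply]
    have hmap := hg.2.2 σ
    have hmeas : Measurable (fun (τ : Fin t → ℝ) i => τ (σ i)) := by fun_prop
    have hm : Measurable (fun τ : Fin t → ℝ => (τ ⬝ᵥ τ)⁻¹ * (τ a * τ b)) := by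
      unfold dotProduct
      fun_prop
    conv_rhs => rw [← hmap]
    rw [integral_map hmeas.aemeasurable hm.aestronglyMeasurable]
    congr 1
    ext τ
    have : (fun i => τ (σ i)) ⬝ᵥ (fun i => τ (σ i)) = τ ⬝ᵥ τ :=
      Equiv.sum_comp σ (fun i => τ i * τ i)
    rw [this]) (by
    intro a
    simp only [hM, Matrix.of_apply]
    rw [← integral_finsetSum _ fun b _ => ratio_int a b]
    rw [integral_congr_ae (g := fun _ => (0 : ℝ))]
    · simp
    · filter_upwards [ae_prior hg] with τ hτ
      rw [← Finset.mul_sum, ← Finset.mul_sum, hτ.1]; simp)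
  have h2 := congrFun (congrFun h1 i) j
  rw [htr] at h2
  simpa [hM] using h2

lemma Ecrit_le {p t n : ℕ} (hp : 2 ≤ p) (ht : 3 ≤ t) {S : Matrix (Fin p) (Fin p) ℝ}
    (hS : S.PosDef) {g : Measure (Fin t → ℝ)} (hg : IsExchangeablePrior g) (l0 x : ℝ)
    {w : TrtSeq p t → ℝ} (h : EAdmissible n S g l0 w) :
    Ecrit n S g l0 w ≤ n * qD S w x / ((t : ℝ) - 1) := by
  have := hg.1
  have hfun : ∀ τ : Fin t → ℝ, (τ ⬝ᵥ τ)⁻¹ * (τ ⬝ᵥ (Qmat n S w x *ᵥ τ)) =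
      ∑ i, ∑ j, Qmat n S w x i j * ((τ ⬝ᵥ τ)⁻¹ * (τ i * τ j)) := by
    intro τ
    have h2 : τ ⬝ᵥ (Qmat n S w x *ᵥ τ) = ∑ i, ∑ j, τ i * (Qmat n S w x i j * τ j) := by
      simp [dotProduct, mulVec, Finset.mul_sum]
    rw [h2, Finset.mul_sum]
    refine Finset.sum_congr rfl fun i _ => ?_
    rw [Finset.mul_sum]
    refine Finset.sum_congr rfl fun j _ => ?_
    ring
  have hint : Integrable (fun τ : Fin t → ℝ =>
      ∑ i, ∑ j, Qmat n S w x i j * ((τ ⬝ᵥ τ)⁻¹ * (τ i * τ j))) g :=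
    integrable_finsetSum _ fun i _ => integrable_finsetSum _ fun j _ =>
      (ratio_int i j).const_mul _
  have h1 : Ecrit n S g l0 w ≤ ∫ τ : Fin t → ℝ,
      ∑ i, ∑ j, Qmat n S w x i j * ((τ ⬝ᵥ τ)⁻¹ * (τ i * τ j)) ∂g := by
    refine integral_mono_ae h.2.2 hint ?_
    filter_upwards [ae_prior hg, h.2.1] with τ hτ hpos
    rw [← hfun]
    exact mD_le hp hS w x l0 hτ.1 hτ.2 hpos
  refine h1.trans (le_of_eq ?_)
  have hsplit : ∀ Q : Fin t → Fin t → ℝ,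
      ∫ τ : Fin t → ℝ, ∑ i, ∑ j, Q i j * ((τ ⬝ᵥ τ)⁻¹ * (τ i * τ j)) ∂g =
      ∑ i, ∑ j, Q i j * ∫ τ : Fin t → ℝ, ((τ ⬝ᵥ τ)⁻¹ * (τ i * τ j)) ∂g := by
    intro Q
    rw [integral_finsetSum _ fun i _ => integrable_finsetSum _ fun j _ =>
      (ratio_int i j).const_mul _]
    refine Finset.sum_congr rfl fun i _ => ?_
    rw [integral_finsetSum _ fun j _ => (ratio_int i j).const_mul _]
    refine Finset.sum_congr rfl fun j _ => ?_
    rw [integral_const_mul]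
  refine (hsplit (fun i j => Qmat n S w x i j)).trans ?_
  have h3 : ∀ i, ∑ j, Qmat n S w x i j * ∫ τ : Fin t → ℝ, ((τ ⬝ᵥ τ)⁻¹ * (τ i * τ j)) ∂g
      = 1 / ((t : ℝ) - 1) * Qmat n S w x i i := by
    intro i
    simp only [prior_moment ht hg]
    have hQB : Qmat n S w x * Bmat t = Qmat n S w x := by
      simp only [Qmat, Matrix.add_mul, Matrix.smul_mul, ChatD_mul_B ht]
    conv_rhs => rw [← hQB, Matrix.mul_apply, Finset.mul_sum]
    refine Finset.sum_congr rfl fun j _ => ?_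
    rw [show Bmat t j i = Bmat t i j by simp [Bmat_apply, eq_comm]]
    ring
  simp only [h3]
  rw [← Finset.mul_sum]
  have h4 : ∑ i, Qmat n S w x i i = n * qD S w x := by
    change (Qmat n S w x).trace = _
    simp only [Qmat, Matrix.trace_add, Matrix.trace_smul, smul_eq_mul]
    change cD n S w 0 0 + x * (cD n S w 0 1 + cD n S w 1 0) + x ^ 2 * cD n S w 1 1 = _
    rw [cD_symm n hS w 1 0]
    simp only [cD_eq, qD, qSeq, mul_add, Finset.sum_add_distrib, Finset.mul_sum]
    simp only [← Finset.sum_add_distrib]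
    refine Finset.sum_congr rfl fun s _ => ?_
    ring
  rw [h4]; ring

lemma n_qD {p t : ℕ} (n : ℕ) (S : Matrix (Fin p) (Fin p) ℝ) (w : TrtSeq p t → ℝ) (x : ℝ) :
    n * qD S w x = cD n S w 0 0 + 2 * x * cD n S w 0 1 + x ^ 2 * cD n S w 1 1 := by
  simp only [cD_eq, qD, qSeq, mul_add, Finset.sum_add_distrib, Finset.mul_sum]
  simp only [← Finset.sum_add_distrib]
  refine Finset.sum_congr rfl fun s _ => ?_
  ring

lemma Ecrit_good {p t n : ℕ} (ht : 3 ≤ t) {S : Matrix (Fin p) (Fin p) ℝ} (hS : S.PosDef)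
    {g : Measure (Fin t → ℝ)} (hg : IsExchangeablePrior g)
    {w : TrtSeq p t → ℝ} (hw : IsDesign w)
    (h : GoodD n S w) (hc : 0 < cD n S w 1 1) (l0 : ℝ) :
    Ecrit n S g l0 w = n * qD S w (xD n S w) / ((t : ℝ) - 1) := by
  rw [(good_adm ht hS hg hw h hc l0).2, n_qD, xD]
  congr 1
  have := hc.ne'
  field_simp
  ring

lemma alg3 (C b D e h k : ℝ) (hC : 0 < C) (hD : 0 < D) (he : 0 < e) (he1 : e ≤ 1 / 2)
    (heb : e * b ^ 2 ≤ C * D) (hk : 0 ≤ k) :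
    0 < (1 - e) * (C * h ^ 2) + e * (D + b * h + k * h ^ 2) := by
  have h1 : 0 ≤ (1 / 2 - e) * (C * h ^ 2) := mul_nonneg (by linarith) (by positivity)
  have h2 : 0 ≤ e * (k * h ^ 2) := by positivity
  have h3 : 0 < C * h ^ 2 / 2 + e * (D + b * h) := by
    have h4 : 0 < 2 * C * (C * h ^ 2 / 2 + e * (D + b * h)) := by
      have h5 : 2 * C * (C * h ^ 2 / 2 + e * (D + b * h)) =
        (C * h + e * b) ^ 2 + e * (C * D) + e * (C * D - e * b ^ 2) := by ring
      rw [h5]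
      have h6 : 0 < e * (C * D) := by positivity
      have h7 : 0 ≤ e * (C * D - e * b ^ 2) := mul_nonneg he.le (by linarith)
      nlinarith [sq_nonneg (C * h + e * b)]
    exact pos_of_mul_pos_right h4 (by positivity)
  linarith

lemma opt_le {p t n : ℕ} (hp : 2 ≤ p) (ht : 3 ≤ t) (hn : 1 ≤ n)
    {S : Matrix (Fin p) (Fin p) ℝ} (hS : S.PosDef)
    {g : Measure (Fin t → ℝ)} (hg : IsExchangeablePrior g)
    {w : TrtSeq p t → ℝ} (hw : IsDesign w)
    (hG : GoodD n S w) (hc : 0 < cD n S w 1 1) (l0 : ℝ) (hopt : EOptimal n S g l0 w)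
    (s : TrtSeq p t) : qSeq S s (xD n S w) ≤ qD S w (xD n S w) := by
  by_contra hlt
  push Not at hlt
  have hn' : (0 : ℝ) < n := by exact_mod_cast hn
  have ht' : (3 : ℝ) ≤ t := by exact_mod_cast ht
  have hN : 0 < (t : ℝ) - 1 := by linarith
  set x := xD n S w with hx
  set C := cD n S w 1 1 with hC
  set D := n * (qSeq S s x - qD S w x) with hD
  have hDpos : 0 < D := mul_pos hn' (by linarith)
  set b := n * (2 * cseq S s 0 1 + 2 * x * cseq S s 1 1) with hb
  set k := n * cseq S s 1 1 with hk
  have hkn : 0 ≤ k := mul_nonneg hn'.le (cseq_nonneg hp hS s 1)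
  obtain ⟨e, he, he1, heb⟩ : ∃ e : ℝ, 0 < e ∧ e ≤ 1 / 2 ∧ e * b ^ 2 ≤ C * D := by
    refine ⟨min (1 / 2) (C * D / (b ^ 2 + 1)), ?_, min_le_left _ _, ?_⟩
    · apply lt_min (by norm_num)
      positivity
    · calc min (1 / 2) (C * D / (b ^ 2 + 1)) * b ^ 2
          ≤ C * D / (b ^ 2 + 1) * b ^ 2 := by gcongr; exact min_le_right _ _
        _ ≤ C * D := by
          rw [div_mul_eq_mul_div, div_le_iff₀ (by positivity)]
          nlinarith [mul_pos hc hDpos]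
  set w' := mix e w (orb s) with hw'
  have hG' : GoodD n S w' := good_mix e hG (good_orb ht S s)
  have hd' : IsDesign w' := design_mix he.le (by linarith) hw (design_orb s)
  have hc' : 0 < cD n S w' 1 1 := by
    rw [hw', cD_mix, cD_orb]
    have h1 : 0 < (1 - e) * C := mul_pos (by linarith) hc
    have h2 : 0 ≤ e * k := mul_nonneg he.le hkn
    linarith
  have h1 := hopt w' (good_adm ht hS hg hd' hG' hc' l0).1
  rw [Ecrit_good ht hS hg hd' hG' hc', Ecrit_good ht hS hg hw hG hc,
    div_le_div_iff_of_pos_right hN] at h1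
  set y := xD n S w' with hy
  have h2 := alg3 C b D e (y - x) k hc hDpos he he1 heb hkn
  have h3 : x * C = - cD n S w 0 1 := by
    rw [hx, xD, ← hC]
    have := hc.ne'
    field_simp
  have hq : n * qD S w x = cD n S w 0 0 + 2 * x * cD n S w 0 1 + x ^ 2 * C := n_qD n S w x
  have h4 : n * qD S w' y - n * qD S w x =
      (1 - e) * (C * (y - x) ^ 2) + e * (D + b * (y - x) + k * (y - x) ^ 2) := by
    have hDe : D = n * qSeq S s x - n * qD S w x := by rw [hD]; ring
    have h01 : cD n S w 0 1 = - (x * C) := by linarith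
    rw [hDe, n_qD n S w', hw', cD_mix, cD_mix, cD_mix, cD_orb, cD_orb, cD_orb, hq, h01, hb, hk,
      qSeq]
    ring
  linarith

/-- equivalence theorem for the E-criterion. -/
theorem stmt14 (p t n : ℕ) (hp : 2 ≤ p) (ht : 3 ≤ t) (hn : 1 ≤ n)
    (S : Matrix (Fin p) (Fin p) ℝ) (hS : S.PosDef)
    (l0 : ℝ) (g : Measure (Fin t → ℝ)) (hg : IsExchangeablePrior g)
    (w : TrtSeq p t → ℝ) (hw : IsDesign w) (hps : IsPseudoSymmetric n S w)
    (hc22 : 0 < cD n S w 1 1) (hq1 : 0 < qD S w (xD n S w)) :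
    (EOptimal n S g l0 w ↔
      sSup (Set.range fun s : TrtSeq p t =>
        qSeq S s (xD n S w) / qD S w (xD n S w)) = 1) ∧
    (EOptimal n S g l0 w → ∀ s : TrtSeq p t, 0 < w s →
      qSeq S s (xD n S w) / qD S w (xD n S w) = 1) := by
  have hG := good_of_ps ht hps
  have ht' : (3 : ℝ) ≤ t := by exact_mod_cast ht
  have hN : 0 < (t : ℝ) - 1 := by linarith
  have hle := fun h => opt_le hp ht hn hS hg hw hG hc22 l0 h
  have hE := Ecrit_good ht hS hg hw hG hc22 l0
  set x := xD n S w with hx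
  have hsupp : (∀ s : TrtSeq p t, qSeq S s x ≤ qD S w x) → ∀ s : TrtSeq p t, 0 < w s →
      qSeq S s x / qD S w x = 1 := by
    intro h s hs
    have h1 : ∑ s : TrtSeq p t, w s * (qD S w x - qSeq S s x) = 0 := by
      simp only [mul_sub, Finset.sum_sub_distrib, ← Finset.sum_mul, hw.2, one_mul]
      exact sub_self _
    have h2 := (Finset.sum_eq_zero_iff_of_nonneg (fun s _ =>
      mul_nonneg (hw.1 s) (sub_nonneg.2 (h s)))).1 h1 s (Finset.mem_univ s)
    have h3 : qD S w x - qSeq S s x = 0 := by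
      rcases mul_eq_zero.1 h2 with h4 | h4
      · exact absurd h4 hs.ne'
      · exact h4
    rw [div_eq_one_iff_eq hq1.ne']
    linarith
  refine ⟨⟨fun hopt => ?_, fun hsup => ?_⟩, fun hopt => hsupp (hle hopt)⟩
  · apply IsGreatest.csSup_eq
    constructor
    · obtain ⟨s, hs⟩ : ∃ s, 0 < w s := by
        by_contra hcon
        push Not at hcon
        have := Finset.sum_nonpos fun s (_ : s ∈ Finset.univ) => hcon s
        rw [hw.2] at this
        linarith
      exact ⟨s, hsupp (hle hopt) s hs⟩
    · rintro _ ⟨s, rfl⟩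
      exact (div_le_one hq1).2 (hle hopt s)
  · have hall : ∀ s : TrtSeq p t, qSeq S s x ≤ qD S w x := by
      intro s
      have : qSeq S s x / qD S w x ≤ 1 := by
        rw [← hsup]
        exact le_csSup (Set.finite_range _).bddAbove ⟨s, rfl⟩
      exact (div_le_one hq1).1 this
    intro w' hw'
    refine (Ecrit_le hp ht hS hg l0 x hw').trans ?_
    rw [hE]
    have : qD S w' x ≤ qD S w x := by
      calc qD S w' x ≤ ∑ s : TrtSeq p t, w' s * qD S w x :=
            Finset.sum_le_sum fun s _ => mul_le_mul_of_nonneg_left (hall s) (hw'.1.1 s)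
        _ = qD S w x := by rw [← Finset.sum_mul, hw'.1.2, one_mul]
    gcongr
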